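/- arXiv:1501.07323 — 2 statements merged into one kernel-verified Lean document; each statement's English description precedes it below -/
import Mathlib

section
/- Let 1 ≤ k ≤ n, m ≥ k, and η ∈ [0,1]. Suppose the degree distribution is the binomial distribution Ω_d = C(n,d)/(2^n−1) for 1 ≤ d ≤ n, so that each LT row is uniformly distributed over the 2^n−1 nonzero vectors of GF(2)^n. Then, with the random pre-code matrix G_pre (systematic (n,k,η) LDPC generator) and the random m×n LT matrix G_LT with i.i.d. LT rows independent of G_pre, the probability that the m×k product matrix G_LT·G_pre over GF(2) has rank k is at least 1 − (2^k − 1) · ((2^{n−1} − 1)/(2^n − 1))^m. -/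
open Finset

noncomputable section

/-- Probability of a particular realization of a matrix with i.i.d. Bernoulli(η) entries
(each entry equals `1` with probability `η`). -/
def preProb (η : ℝ) {l i : ℕ} (P : Matrix (Fin l) (Fin i) (ZMod 2)) : ℝ :=
  ∏ a : Fin l, ∏ b : Fin i, if P a b = 1 then η else 1 - η

/-- Probability of a particular LT row under degree distribution Ω: a degree
`d ∈ {1,...,n}` is drawn with probability `Ω d`, then the row is uniform among the
`C(n,d)` vectors of Hamming weight `d`. -/
def ltRowProb (n : ℕ) (Ω : ℕ → ℝ) (g : Fin n → ZMod 2) : ℝ :=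
  if hammingNorm g = 0 then 0 else Ω (hammingNorm g) / (n.choose (hammingNorm g) : ℝ)

/-- Probability of a particular LT matrix (i.i.d. LT rows). -/
def ltProb (n : ℕ) (Ω : ℕ → ℝ) {m : ℕ} (G : Matrix (Fin m) (Fin n) (ZMod 2)) : ℝ :=
  ∏ i : Fin m, ltRowProb n Ω (G i)

/-- The systematic pre-code generator matrix `[I_k ; P]` (identity on top of `P`). -/
def Gpre {n k : ℕ} (hkn : k ≤ n) (P : Matrix (Fin (n - k)) (Fin k) (ZMod 2)) :
    Matrix (Fin n) (Fin k) (ZMod 2) :=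
  Matrix.of fun a b =>
    if ha : (a : ℕ) < k then (if (a : ℕ) = (b : ℕ) then 1 else 0)
    else P ⟨(a : ℕ) - k, by have := a.isLt; omega⟩ b

/-- `J(r) = ∑_{d=1}^{n} Ω_d (∑_{s even, 0 ≤ s ≤ d} C(r,s) C(n−r,d−s)) / C(n,d)`. -/
def J (n : ℕ) (Ω : ℕ → ℝ) (r : ℕ) : ℝ :=
  ∑ d ∈ Finset.Icc 1 n, Ω d *
    (∑ s ∈ (Finset.range (d + 1)).filter (fun s => Even s),
        (r.choose s : ℝ) * ((n - r).choose (d - s) : ℝ)) / (n.choose d : ℝ)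

/-- `D(i,r) = C(n−k, r−i) ((1+(1−2η)^i)/2)^{n−k−(r−i)} ((1−(1−2η)^i)/2)^{r−i}`. -/
def D (n k : ℕ) (η : ℝ) (i r : ℕ) : ℝ :=
  ((n - k).choose (r - i) : ℝ) * ((1 + (1 - 2 * η) ^ i) / 2) ^ (n - k - (r - i)) *
    ((1 - (1 - 2 * η) ^ i) / 2) ^ (r - i)

lemma pre_sum (η : ℝ) (l i : ℕ) :
    ∑ P : Matrix (Fin l) (Fin i) (ZMod 2), preProb η P = 1 := by
  unfold preProb
  have h1 : ∑ z : ZMod 2, (if z = 1 then η else 1 - η) = 1 := by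
    rw [show (Finset.univ : Finset (ZMod 2)) = {0, 1} by decide]
    simp
  have h2 : ∑ r : Fin i → ZMod 2, ∏ b : Fin i, (if r b = 1 then η else 1 - η) = 1 := by
    have := Fintype.prod_sum (fun (_ : Fin i) (z : ZMod 2) => (if z = 1 then η else 1 - η))
    rw [← this]; simp [h1]
  have := Fintype.prod_sum (fun (_ : Fin l) (r : Fin i → ZMod 2) =>
    ∏ b : Fin i, (if r b = 1 then η else 1 - η))
  refine this.symm.trans ?_
  simp [h2]

lemma pre_nonneg (η : ℝ) (h0 : 0 ≤ η) (h1 : η ≤ 1) (l i : ℕ)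
    (P : Matrix (Fin l) (Fin i) (ZMod 2)) : 0 ≤ preProb η P := by
  unfold preProb
  refine Finset.prod_nonneg fun a _ => Finset.prod_nonneg fun b _ => ?_
  split_ifs <;> linarith

lemma row_eq (n : ℕ) (g : Fin n → ZMod 2) :
    ltRowProb n (fun d => (n.choose d : ℝ) / ((2 : ℝ) ^ n - 1)) g
      = (1 - if g = 0 then 1 else 0) / ((2 : ℝ) ^ n - 1) := by
  unfold ltRowProb
  by_cases h : g = 0
  · simp [h]
  · have h' : hammingNorm g ≠ 0 := by simpa using h
    have hle : hammingNorm g ≤ n := by simpa using hammingNorm_le_card_fintype (x := g)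
    have : (n.choose (hammingNorm g) : ℝ) ≠ 0 := by
      exact_mod_cast (Nat.choose_pos hle).ne'
    simp only [h, h', if_false]
    field_simp
    simp

lemma two_pow_pos (n : ℕ) (hn : 1 ≤ n) : (0 : ℝ) < 2 ^ n - 1 := by
  have : (1 : ℝ) < 2 ^ n := one_lt_pow₀ (by norm_num) (by omega)
  linarith

lemma row_nonneg (n : ℕ) (hn : 1 ≤ n) (g : Fin n → ZMod 2) :
    0 ≤ ltRowProb n (fun d => (n.choose d : ℝ) / ((2 : ℝ) ^ n - 1)) g := by
  rw [row_eq]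
  have := two_pow_pos n hn
  apply div_nonneg _ this.le
  split_ifs <;> norm_num

lemma row_sum (n : ℕ) (hn : 1 ≤ n) :
    ∑ g, ltRowProb n (fun d => (n.choose d : ℝ) / ((2 : ℝ) ^ n - 1)) g = 1 := by
  simp_rw [row_eq]
  have := two_pow_pos n hn
  rw [← Finset.sum_div, Finset.sum_sub_distrib]
  simp [ZMod.card]
  exact this.ne'

lemma dot_count (n : ℕ) (hn : 1 ≤ n) (y : Fin n → ZMod 2) (hy : y ≠ 0) :
    ∑ g : Fin n → ZMod 2, (if g ⬝ᵥ y = 0 then (1 : ℝ) else 0) = 2 ^ (n - 1) := by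
  obtain ⟨j, hj⟩ := Function.ne_iff.mp hy
  have hj1 : y j = 1 := by
    have : ∀ z : ZMod 2, z ≠ 0 → z = 1 := by decide
    exact this _ hj
  have e1 : ∑ g : Fin n → ZMod 2, (if g ⬝ᵥ y = 0 then (1 : ℝ) else 0)
      = ∑ g : Fin n → ZMod 2, (1 - if g ⬝ᵥ y = 0 then (1 : ℝ) else 0) := by
    rw [← Equiv.sum_comp (Equiv.addRight (Pi.single j (1 : ZMod 2)))]
    refine Finset.sum_congr rfl fun g _ => ?_
    simp only [Equiv.coe_addRight, add_dotProduct, single_dotProduct, hj1, one_mul]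
    have : ∀ z : ZMod 2, (z + 1 = 0 ↔ ¬ z = 0) := by decide
    simp only [this]
    by_cases h : g ⬝ᵥ y = 0 <;> simp [h]
  rw [Finset.sum_sub_distrib] at e1
  have e2 : ∑ g : Fin n → ZMod 2, (1 : ℝ) = 2 ^ n := by simp [ZMod.card]
  obtain ⟨t, rfl⟩ : ∃ t, n = t + 1 := ⟨n - 1, by omega⟩
  rw [e2, pow_succ] at e1
  simp only [Nat.add_sub_cancel]
  linarith

lemma row_dot (n : ℕ) (hn : 1 ≤ n) (y : Fin n → ZMod 2) (hy : y ≠ 0) :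
    ∑ g : Fin n → ZMod 2, (if g ⬝ᵥ y = 0 then
      ltRowProb n (fun d => (n.choose d : ℝ) / ((2 : ℝ) ^ n - 1)) g else 0)
      = ((2 : ℝ) ^ (n - 1) - 1) / ((2 : ℝ) ^ n - 1) := by
  have e : ∀ g : Fin n → ZMod 2, (if g ⬝ᵥ y = 0 then
      ltRowProb n (fun d => (n.choose d : ℝ) / ((2 : ℝ) ^ n - 1)) g else 0)
      = ((if g ⬝ᵥ y = 0 then 1 else 0) - if g = 0 then 1 else 0) / ((2 : ℝ) ^ n - 1) := by
    intro g
    rw [row_eq]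
    by_cases h : g = 0
    · simp [h]
    · by_cases h2 : g ⬝ᵥ y = 0 <;> simp [h, h2]
  simp_rw [e]
  rw [← Finset.sum_div, Finset.sum_sub_distrib, dot_count n hn y hy]
  simp

lemma lt_nonneg (n m : ℕ) (hn : 1 ≤ n) (G : Matrix (Fin m) (Fin n) (ZMod 2)) :
    0 ≤ ltProb n (fun d => (n.choose d : ℝ) / ((2 : ℝ) ^ n - 1)) G :=
  Finset.prod_nonneg fun _ _ => row_nonneg n hn _

lemma lt_sum (n m : ℕ) (hn : 1 ≤ n) :
    ∑ G : Matrix (Fin m) (Fin n) (ZMod 2),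
      ltProb n (fun d => (n.choose d : ℝ) / ((2 : ℝ) ^ n - 1)) G = 1 := by
  have := Fintype.prod_sum (fun (_ : Fin m) (g : Fin n → ZMod 2) =>
    ltRowProb n (fun d => (n.choose d : ℝ) / ((2 : ℝ) ^ n - 1)) g)
  refine this.symm.trans ?_
  simp [row_sum n hn]

lemma lt_dot (n m : ℕ) (hn : 1 ≤ n) (y : Fin n → ZMod 2) (hy : y ≠ 0) :
    ∑ G : Matrix (Fin m) (Fin n) (ZMod 2), (if G.mulVec y = 0 then
      ltProb n (fun d => (n.choose d : ℝ) / ((2 : ℝ) ^ n - 1)) G else 0)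
      = (((2 : ℝ) ^ (n - 1) - 1) / ((2 : ℝ) ^ n - 1)) ^ m := by
  have := Fintype.prod_sum (fun (_ : Fin m) (g : Fin n → ZMod 2) => if g ⬝ᵥ y = 0 then
    ltRowProb n (fun d => (n.choose d : ℝ) / ((2 : ℝ) ^ n - 1)) g else 0)
  rw [row_dot n hn y hy] at this
  simp only [Finset.prod_const, Finset.card_univ, Fintype.card_fin] at this
  rw [this]
  refine Finset.sum_congr rfl fun G _ => ?_
  rw [Fintype.prod_ite_zero]
  have : G.mulVec y = 0 ↔ ∀ i, G i ⬝ᵥ y = 0 := by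
    rw [funext_iff]; rfl
  simp only [this]
  unfold ltProb
  congr

lemma gpre_ne {n k : ℕ} (hkn : k ≤ n) (P : Matrix (Fin (n - k)) (Fin k) (ZMod 2))
    (x : Fin k → ZMod 2) (hx : x ≠ 0) : (Gpre hkn P).mulVec x ≠ 0 := by
  intro h
  apply hx
  funext b
  have := congrFun h (Fin.castLE hkn b)
  simpa [Matrix.mulVec, dotProduct, Gpre, Fin.val_inj] using this

lemma rank_dich {m k : ℕ} (A : Matrix (Fin m) (Fin k) (ZMod 2)) (h : A.rank ≠ k) :
    ∃ x, x ≠ 0 ∧ A.mulVec x = 0 := by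
  by_contra! hc
  apply h
  have hinj : Function.Injective A.mulVecLin := by
    rw [injective_iff_map_eq_zero]
    intro x hx
    by_contra hne
    exact hc x hne hx
  have := LinearMap.finrank_range_of_inj hinj
  simpa [Matrix.rank] using this

lemma fixed_P (n k m : ℕ) (hk : 1 ≤ k) (hkn : k ≤ n)
    (P : Matrix (Fin (n - k)) (Fin k) (ZMod 2)) :
    1 - ((2 : ℝ) ^ k - 1) * (((2 : ℝ) ^ (n - 1) - 1) / ((2 : ℝ) ^ n - 1)) ^ m
      ≤ ∑ G : Matrix (Fin m) (Fin n) (ZMod 2),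
            if (G * Gpre hkn P).rank = k then
              ltProb n (fun d => (n.choose d : ℝ) / ((2 : ℝ) ^ n - 1)) G
            else 0 := by
  have hn : 1 ≤ n := hk.trans hkn
  have key : ∀ G : Matrix (Fin m) (Fin n) (ZMod 2),
      ltProb n (fun d => (n.choose d : ℝ) / ((2 : ℝ) ^ n - 1)) G ≤
      (if (G * Gpre hkn P).rank = k then
              ltProb n (fun d => (n.choose d : ℝ) / ((2 : ℝ) ^ n - 1)) G
            else 0) + ∑ x ∈ Finset.univ.erase (0 : Fin k → ZMod 2),
        if G.mulVec ((Gpre hkn P).mulVec x) = 0 then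
          ltProb n (fun d => (n.choose d : ℝ) / ((2 : ℝ) ^ n - 1)) G else 0 := by
    intro G
    have hG := lt_nonneg n m hn G
    have hnn : ∀ x ∈ Finset.univ.erase (0 : Fin k → ZMod 2),
        0 ≤ if G.mulVec ((Gpre hkn P).mulVec x) = 0 then
          ltProb n (fun d => (n.choose d : ℝ) / ((2 : ℝ) ^ n - 1)) G else 0 := by
      intro x _
      split_ifs
      · exact hG
      · exact le_rfl
    by_cases h : (G * Gpre hkn P).rank = k
    · rw [if_pos h]
      linarith [Finset.sum_nonneg hnn]
    · obtain ⟨x, hx, hx0⟩ := rank_dich _ h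
      rw [← Matrix.mulVec_mulVec] at hx0
      have := Finset.single_le_sum hnn (Finset.mem_erase.2 ⟨hx, Finset.mem_univ x⟩)
      rw [if_pos hx0] at this
      rw [if_neg h]
      linarith
  have hs := Finset.sum_le_sum fun G (_ : G ∈ Finset.univ) => key G
  rw [lt_sum n m hn, Finset.sum_add_distrib, Finset.sum_comm (t := Finset.univ.erase _)] at hs
  rw [Finset.sum_congr rfl fun x hx =>
    lt_dot n m hn _ (gpre_ne hkn P x (Finset.ne_of_mem_erase hx))] at hs
  rw [Finset.sum_const, Finset.card_erase_of_mem (Finset.mem_univ _), nsmul_eq_mul,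
    Nat.cast_sub (by simp [Nat.one_le_iff_ne_zero])] at hs
  simp only [Finset.card_univ, Fintype.card_pi, ZMod.card, Finset.prod_const,
    Fintype.card_fin, Nat.cast_pow, Nat.cast_ofNat, Nat.cast_one] at hs
  linarith

/-- Corollary 1: with the binomial degree distribution
`Ω_d = C(n,d)/(2^n − 1)` (so each LT row is uniform over the nonzero vectors of GF(2)^n),
the decoding success probability is at least
`1 − (2^k − 1) ((2^{n−1} − 1)/(2^n − 1))^m`. -/
theorem raptor_binomial_lower_bound
    (n k m : ℕ) (η : ℝ)
    (hk : 1 ≤ k) (hkn : k ≤ n) (hm : k ≤ m)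
    (hη0 : 0 ≤ η) (hη1 : η ≤ 1) :
    1 - ((2 : ℝ) ^ k - 1) * (((2 : ℝ) ^ (n - 1) - 1) / ((2 : ℝ) ^ n - 1)) ^ m
      ≤ ∑ P : Matrix (Fin (n - k)) (Fin k) (ZMod 2),
          ∑ G : Matrix (Fin m) (Fin n) (ZMod 2),
            if (G * Gpre hkn P).rank = k then
              preProb η P * ltProb n (fun d => (n.choose d : ℝ) / ((2 : ℝ) ^ n - 1)) G
            else 0 := by

  calc _ = ∑ P : Matrix (Fin (n - k)) (Fin k) (ZMod 2), preProb η P *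
        (1 - ((2 : ℝ) ^ k - 1) * (((2 : ℝ) ^ (n - 1) - 1) / ((2 : ℝ) ^ n - 1)) ^ m) := by
        rw [← Finset.sum_mul, pre_sum, one_mul]
    _ ≤ _ := by
        refine Finset.sum_le_sum fun P _ => ?_
        refine (mul_le_mul_of_nonneg_left (fixed_P n k m hk hkn P)
          (pre_nonneg η hη0 hη1 _ _ P)).trans_eq ?_
        rw [Finset.mul_sum]
        refine Finset.sum_congr rfl fun G _ => ?_
        rw [mul_ite, mul_zero]
end
end

section
/- Let l ≥ 0 and i ≥ 1 be integers and η ∈ [0,1]. Let P be a random l×i matrix over GF(2) whose entries are i.i.d. Bernoulli(η) bits, and let 1_i denote the all-ones column vector of length i. Then for every 0 ≤ j ≤ l, the probability that the Hamming weight of the product P·1_i (computed over GF(2)) equals j is C(l,j) · ((1−(1−2η)^i)/2)^j · ((1+(1−2η)^i)/2)^{l−j}. -/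
open Finset

noncomputable section

def chi2 (x : ZMod 2) : ℝ := if x = 1 then -1 else 1

lemma zmod2_cases (x : ZMod 2) : x = 0 ∨ x = 1 := by
  revert x; decide

lemma chi2_add (x y : ZMod 2) : chi2 (x + y) = chi2 x * chi2 y := by
  have h : (1 + 1 : ZMod 2) = 0 := by decide
  rcases zmod2_cases x with rfl | rfl <;> rcases zmod2_cases y with rfl | rfl <;>
    simp [chi2, h]

lemma chi2_sum {ι : Type*} (s : Finset ι) (r : ι → ZMod 2) :
    chi2 (∑ b ∈ s, r b) = ∏ b ∈ s, chi2 (r b) := by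
  classical
  induction s using Finset.induction_on with
  | empty => simp [chi2]
  | insert a s ha ih => rw [Finset.sum_insert ha, Finset.prod_insert ha, chi2_add, ih]

lemma sum_zmod2 (f : ZMod 2 → ℝ) : ∑ x, f x = f 0 + f 1 := Fin.sum_univ_two f

lemma sum_pi_prod {n : ℕ} {α : Type*} [Fintype α] (f : Fin n → α → ℝ) :
    ∑ r : Fin n → α, ∏ b, f b (r b) = ∏ b, ∑ x, f b x := by
  classical
  rw [Finset.prod_univ_sum, Fintype.piFinset_univ]

def roww (η : ℝ) {i : ℕ} (r : Fin i → ZMod 2) : ℝ :=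
  ∏ b : Fin i, if r b = 1 then η else 1 - η

lemma row_total (η : ℝ) (i : ℕ) : ∑ r : Fin i → ZMod 2, roww η r = 1 := by
  unfold roww
  rw [sum_pi_prod (fun (_ : Fin i) (x : ZMod 2) => if x = 1 then η else 1 - η)]
  simp [sum_zmod2]

lemma row_chi (η : ℝ) (i : ℕ) :
    ∑ r : Fin i → ZMod 2, chi2 (∑ b, r b) * roww η r = (1 - 2 * η) ^ i := by
  unfold roww
  simp_rw [chi2_sum, ← Finset.prod_mul_distrib]
  rw [sum_pi_prod (fun (_ : Fin i) (x : ZMod 2) => chi2 x * if x = 1 then η else 1 - η)]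
  simp only [sum_zmod2, chi2]
  simp
  ring

lemma row_prob (η : ℝ) (i : ℕ) (p : Prop) [Decidable p] :
    ∑ r : Fin i → ZMod 2, (if (∑ b, r b ≠ 0 ↔ p) then roww η r else 0)
      = if p then (1 - (1 - 2 * η) ^ i) / 2 else (1 + (1 - 2 * η) ^ i) / 2 := by
  rw [← row_chi]
  nth_rewrite 1 2 [← row_total η i]
  rw [← Finset.sum_sub_distrib, ← Finset.sum_add_distrib, Finset.sum_div, Finset.sum_div]
  by_cases hp : p
  · simp only [hp, if_true, iff_true]
    refine Finset.sum_congr rfl fun r _ => ?_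
    rcases zmod2_cases (∑ b, r b) with h | h <;> simp [h, chi2]
  · simp only [hp, if_false, iff_false]
    refine Finset.sum_congr rfl fun r _ => ?_
    rcases zmod2_cases (∑ b, r b) with h | h <;> simp [h, chi2]

lemma indicator_eq {l i : ℕ} (j : ℕ) (η : ℝ) (P : Matrix (Fin l) (Fin i) (ZMod 2)) :
    (if hammingNorm (P.mulVec fun _ => 1) = j then preProb η P else 0)
      = ∑ S ∈ Finset.powersetCard j (Finset.univ : Finset (Fin l)),
          ∏ a, (if (∑ b, P a b ≠ 0 ↔ a ∈ S) then roww η (P a) else 0) := by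
  classical
  set T : Finset (Fin l) := Finset.univ.filter fun a => ∑ b, P a b ≠ 0 with hT
  have hn : hammingNorm (P.mulVec fun _ => 1) = T.card := by
    simp [hammingNorm, hT, Matrix.mulVec, dotProduct]
  have hS : ∀ S : Finset (Fin l),
      (∏ a, (if (∑ b, P a b ≠ 0 ↔ a ∈ S) then roww η (P a) else 0))
        = if T = S then preProb η P else 0 := by
    intro S
    by_cases h : T = S
    · rw [if_pos h]
      refine Finset.prod_congr rfl fun a _ => ?_
      rw [if_pos (by rw [← h, hT]; simp)]
      rfl
    · rw [if_neg h]
      have : ∃ a, ¬ (∑ b, P a b ≠ 0 ↔ a ∈ S) := by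
        by_contra hc
        push Not at hc
        apply h
        ext a
        rw [← hc a, hT]; simp
      obtain ⟨a, ha⟩ := this
      exact Finset.prod_eq_zero (Finset.mem_univ a) (if_neg ha)
  simp_rw [hS]
  rw [Finset.sum_ite_eq, hn]
  simp [Finset.mem_powersetCard]

/-- for a random `l × i` matrix `P` over GF(2) with i.i.d. Bernoulli(η)
entries, the probability that the Hamming weight of `P · 1_i` (over GF(2)) equals `j` is
`C(l,j) ((1−(1−2η)^i)/2)^j ((1+(1−2η)^i)/2)^{l−j}`, for every `0 ≤ j ≤ l`. -/
theorem weight_of_bernoulli_matrix_mul_ones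
    (l i j : ℕ) (η : ℝ) (hi : 1 ≤ i) (hη0 : 0 ≤ η) (hη1 : η ≤ 1) (hj : j ≤ l) :
    (∑ P : Matrix (Fin l) (Fin i) (ZMod 2),
        if hammingNorm (P.mulVec fun _ => 1) = j then preProb η P else 0)
      = (l.choose j : ℝ) * ((1 - (1 - 2 * η) ^ i) / 2) ^ j *
          ((1 + (1 - 2 * η) ^ i) / 2) ^ (l - j) := by
  simp_rw [indicator_eq]
  rw [Finset.sum_comm]
  have key : ∀ S ∈ Finset.powersetCard j (Finset.univ : Finset (Fin l)),
      (∑ P : Matrix (Fin l) (Fin i) (ZMod 2),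
        ∏ a, (if (∑ b, P a b ≠ 0 ↔ a ∈ S) then roww η (P a) else 0))
      = ((1 - (1 - 2 * η) ^ i) / 2) ^ j * ((1 + (1 - 2 * η) ^ i) / 2) ^ (l - j) := by
    intro S hS
    have hc := (Finset.mem_powersetCard.1 hS).2
    refine (sum_pi_prod (fun (a : Fin l) (r : Fin i → ZMod 2) =>
      if (∑ b, r b ≠ 0 ↔ a ∈ S) then roww η r else 0)).trans ?_
    simp_rw [row_prob]
    rw [Finset.prod_ite, Finset.prod_const, Finset.prod_const]
    have h1 : (Finset.univ.filter fun a => a ∈ S) = S := by ext; simp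
    have h2 : (Finset.univ.filter fun a => a ∉ S) = Sᶜ := by ext; simp
    rw [h1, h2, Finset.card_compl, hc, Fintype.card_fin]
  rw [Finset.sum_congr rfl key]
  simp [mul_assoc]
end
end
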